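/- arXiv:2508.09734 — 3 statements merged into one kernel-verified Lean document; each statement's English description precedes it below -/
import Mathlib

section
/- With Guardable and the greedy step function f as in the context: let k ∈ ℕ, u ∈ ℝ, and let t : Fin (k + 1) → ℝ be monotone with t 0 = u, t k = u + n, and Guardable (t i) (t (i + 1)) for every i < k. Then f^[k] u ≥ u + n. (Hence the greedy procedure, started at the start point of a cover of the boundary by k guardable chains, terminates after at most k steps.) -/
/-! Greedy stays ahead: `t i ≤ f^[i] u` for every `i`, by induction on `i`. If the greedy position
`x = f^[i] u` has not yet passed `t (i + 1)`, then `[x, t (i + 1)]` is a subinterval of the guardable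
`[t i, t (i + 1)]`, so it is guardable and maximality of the greedy step gives `t (i + 1) ≤ f x`. -/

/-- `Guardable P γ s t`: some point `g ∈ P` sees (within `P`) every boundary point
`γ r` for `r ∈ [s, t]`. -/
def Guardable (P : Set (ℝ × ℝ)) (γ : ℝ → ℝ × ℝ) (s t : ℝ) : Prop :=
  ∃ g ∈ P, ∀ r ∈ Set.Icc s t, segment ℝ g (γ r) ⊆ P

theorem Guardable.mono_left {P : Set (ℝ × ℝ)} {γ : ℝ → ℝ × ℝ} {s s' t : ℝ}
    (h : Guardable P γ s t) (hs : s ≤ s') : Guardable P γ s' t := by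
  obtain ⟨g, hg, hseg⟩ := h
  exact ⟨g, hg, fun r hr => hseg r (Set.Icc_subset_Icc_left hs hr)⟩

/-- **Lemma (greedy optimality).** Let `f` be the greedy step: `f s` is the maximal
endpoint `t ≥ s` with `Guardable s t`. If `t : Fin (k+1) → ℝ` is a monotone cover with
`t 0 = u`, `t k = u + n` and `Guardable (t i) (t (i+1))` for every `i < k`, then the
`k`-fold greedy iteration starting at `u` reaches `u + n`. -/
theorem greedy_reaches_end_in_k_steps
    (P : Set (ℝ × ℝ)) (n : ℝ) (hn : 0 < n) (γ : ℝ → ℝ × ℝ)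
    (f : ℝ → ℝ)
    (hf_le : ∀ s : ℝ, s ≤ f s)
    (hf_guard : ∀ s : ℝ, Guardable P γ s (f s))
    (hf_max : ∀ s t : ℝ, s ≤ t → Guardable P γ s t → t ≤ f s)
    (k : ℕ) (u : ℝ) (t : Fin (k + 1) → ℝ) (hmono : Monotone t)
    (h0 : t 0 = u) (hlast : t (Fin.last k) = u + n)
    (hchain : ∀ i : Fin k, Guardable P γ (t i.castSucc) (t i.succ)) :
    u + n ≤ f^[k] u := by
  have key : ∀ i : Fin (k + 1), t i ≤ f^[(i : ℕ)] u := by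
    intro i
    induction i using Fin.induction with
    | zero => simp [h0]
    | succ i ih =>
      rw [Fin.val_succ, Function.iterate_succ_apply']
      rw [Fin.val_castSucc] at ih
      rcases le_total (t i.succ) (f^[(i : ℕ)] u) with h | h
      · exact h.trans (hf_le _)
      · exact hf_max _ _ h ((hchain i).mono_left ih)
  simpa [hlast] using key (Fin.last k)
end

section
/- With Guardable and the greedy step function f as in the context, and assuming additionally that γ is n-periodic (Function.Periodic γ n): let k ∈ ℕ, let s : Fin (k + 1) → ℝ be monotone with s k = s 0 + n and Guardable (s i) (s (i + 1)) for every i < k, and let u ∈ Set.Icc (s 0) (s 0 + n). Then f^[k + 1] u ≥ u + n. (Hence the greedy procedure started at an arbitrary point produces at most one more guard than a cover of the boundary by k guardable chains.) -/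
theorem Guardable.mono {P : Set (ℝ × ℝ)} {γ : ℝ → ℝ × ℝ} {a b c d : ℝ}
    (h : Guardable P γ a b) (hac : a ≤ c) (hdb : d ≤ b) : Guardable P γ c d := by
  obtain ⟨g, hg, hs⟩ := h
  exact ⟨g, hg, fun r hr => hs r ⟨hac.trans hr.1, hr.2.trans hdb⟩⟩

theorem Guardable.add_period {P : Set (ℝ × ℝ)} {γ : ℝ → ℝ × ℝ} {c a b : ℝ}
    (hper : Function.Periodic γ c) (h : Guardable P γ a b) :
    Guardable P γ (a + c) (b + c) := by
  obtain ⟨g, hg, hs⟩ := h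
  refine ⟨g, hg, fun r hr => ?_⟩
  rw [← hper.sub_eq r]
  exact hs (r - c) ⟨by linarith [hr.1], by linarith [hr.2]⟩

theorem greedy_monotone {P : Set (ℝ × ℝ)} {γ : ℝ → ℝ × ℝ} {f : ℝ → ℝ}
    (hf_le : ∀ s : ℝ, s ≤ f s)
    (hf_guard : ∀ s : ℝ, Guardable P γ s (f s))
    (hf_max : ∀ s t : ℝ, s ≤ t → Guardable P γ s t → t ≤ f s) : Monotone f := by
  intro x y hxy
  rcases le_total (f x) y with h | h
  · exact h.trans (hf_le y)
  · exact hf_max y (f x) h ((hf_guard x).mono hxy le_rfl)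

theorem greedy_add_period {P : Set (ℝ × ℝ)} {γ : ℝ → ℝ × ℝ} {f : ℝ → ℝ} {n : ℝ}
    (hper : Function.Periodic γ n)
    (hf_le : ∀ s : ℝ, s ≤ f s)
    (hf_guard : ∀ s : ℝ, Guardable P γ s (f s))
    (hf_max : ∀ s t : ℝ, s ≤ t → Guardable P γ s t → t ≤ f s) (x : ℝ) :
    f (x + n) = f x + n := by
  apply le_antisymm
  · have h := (hf_guard (x + n)).add_period hper.neg
    rw [add_neg_cancel_right] at h
    have := hf_max x _ (by linarith [hf_le (x + n)]) h
    linarith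
  · exact hf_max _ _ (by linarith [hf_le x]) ((hf_guard x).add_period hper)

/-- Greedy iteration dominates any chain of guardable intervals that starts no later. -/
theorem chain_le_greedy_iterate {P : Set (ℝ × ℝ)} {γ : ℝ → ℝ × ℝ} {f : ℝ → ℝ}
    (hf_le : ∀ s : ℝ, s ≤ f s)
    (hf_guard : ∀ s : ℝ, Guardable P γ s (f s))
    (hf_max : ∀ s t : ℝ, s ≤ t → Guardable P γ s t → t ≤ f s)
    {k : ℕ} {s : Fin (k + 1) → ℝ} (hmono : Monotone s)
    (hchain : ∀ i : Fin k, Guardable P γ (s i.castSucc) (s i.succ))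
    {m : ℕ} {x : ℝ} (i : ℕ) (hi : m + i < k + 1)
    (hx : s ⟨m, by omega⟩ ≤ x) : s ⟨m + i, hi⟩ ≤ f^[i] x := by
  induction i with
  | zero => exact hx
  | succ i ih =>
    rw [Function.iterate_succ_apply']
    let j : Fin k := ⟨m + i, by omega⟩
    have hstep : s j.succ ≤ f (s j.castSucc) :=
      hf_max _ _ (hmono j.castSucc_lt_succ.le) (hchain j)
    exact hstep.trans (greedy_monotone hf_le hf_guard hf_max (ih (by omega) hx))

/-- **Lemma (greedy from an arbitrary start point uses at most one extra guard).**
Assume `γ` is `n`-periodic and `f` is the greedy step: `f s` is the maximal endpoint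
`t ≥ s` with `Guardable s t`. If `s : Fin (k+1) → ℝ` is a monotone cover of one period,
i.e. `s k = s 0 + n` and `Guardable (s i) (s (i+1))` for every `i < k`, then for any start
point `u ∈ [s 0, s 0 + n]` the `(k+1)`-fold greedy iteration starting at `u` reaches
`u + n`. -/
theorem greedy_from_arbitrary_start_reaches_end_in_k_succ_steps
    (P : Set (ℝ × ℝ)) (n : ℝ) (hn : 0 < n) (γ : ℝ → ℝ × ℝ)
    (hper : Function.Periodic γ n)
    (f : ℝ → ℝ)
    (hf_le : ∀ s : ℝ, s ≤ f s)
    (hf_guard : ∀ s : ℝ, Guardable P γ s (f s))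
    (hf_max : ∀ s t : ℝ, s ≤ t → Guardable P γ s t → t ≤ f s)
    (k : ℕ) (s : Fin (k + 1) → ℝ) (hmono : Monotone s)
    (hlast : s (Fin.last k) = s 0 + n)
    (hchain : ∀ i : Fin k, Guardable P γ (s i.castSucc) (s i.succ))
    (u : ℝ) (hu : u ∈ Set.Icc (s 0) (s 0 + n)) :
    u + n ≤ f^[k + 1] u := by
  have hf_mono := greedy_monotone hf_le hf_guard hf_max
  have hk : 0 < k := by
    rcases Nat.eq_zero_or_pos k with rfl | h
    · have h0 : s 0 = s 0 + n := hlast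
      linarith
    · exact h
  obtain ⟨j, hj, hju, huj⟩ : ∃ (j : ℕ) (hj : j + 1 < k + 1),
      s ⟨j, by omega⟩ ≤ u ∧ u ≤ s ⟨j + 1, hj⟩ := by
    classical
    -- The least `j` with `u ≤ s (j + 1)`; it exists because `u ≤ s k` and `0 < k`.
    have hex : ∃ j : ℕ, ∃ hj : j + 1 < k + 1, u ≤ s ⟨j + 1, hj⟩ := by
      refine ⟨k - 1, by omega, ?_⟩
      have he : (⟨k - 1 + 1, by omega⟩ : Fin (k + 1)) = Fin.last k :=
        Fin.ext (Nat.sub_add_cancel hk)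
      rw [he, hlast]
      exact hu.2
    obtain ⟨hj, huj⟩ := Nat.find_spec hex
    have hle : ∀ (i : ℕ) (hi : i < k + 1), i ≤ Nat.find hex → s ⟨i, hi⟩ ≤ u := by
      rintro (_ | i) hi hfind
      · exact hu.1
      · by_contra! hlt
        exact Nat.find_min hex (m := i) hfind ⟨hi, hlt.le⟩
    exact ⟨Nat.find hex, hj, hle _ _ le_rfl, huj⟩
  have hreach : s 0 + n ≤ f^[k - j] u := by
    have h := chain_le_greedy_iterate hf_le hf_guard hf_max hmono hchain (k - j)
      (by omega) hju
    have he : (⟨j + (k - j), by omega⟩ : Fin (k + 1)) = Fin.last k :=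
      Fin.ext (Nat.add_sub_cancel' (by omega))
    rwa [he, hlast] at h
  have hagain : s ⟨j + 1, hj⟩ ≤ f^[j + 1] (s 0) := by
    have h := chain_le_greedy_iterate hf_le hf_guard hf_max hmono hchain (m := 0)
      (x := s 0) (j + 1) (by omega) le_rfl
    simpa only [Nat.zero_add] using h
  have hshift : f^[j + 1] (s 0 + n) = f^[j + 1] (s 0) + n :=
    Function.Commute.iterate_left (f := f) (g := (· + n))
      (greedy_add_period hper hf_le hf_guard hf_max) (j + 1) (s 0)
  calc u + n ≤ f^[j + 1] (s 0) + n := by linarith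
    _ = f^[j + 1] (s 0 + n) := hshift.symm
    _ ≤ f^[j + 1] (f^[k - j] u) := hf_mono.iterate (j + 1) hreach
    _ = f^[k + 1] u := by
      rw [← Function.iterate_add_apply, show j + 1 + (k - j) = k + 1 by omega]
end

section
/- Let P ⊆ ℝ × ℝ be a nonempty compact set, γ : ℝ → ℝ × ℝ a continuous function with Set.range γ ⊆ P, n > 0 a real number, and s ∈ ℝ. Then the set {t ∈ Set.Icc s (s + n) | ∃ g ∈ P, ∀ r ∈ Set.Icc s t, segment ℝ g (γ r) ⊆ P} has a greatest element. (This is the well-definedness of the greedy step: for every boundary start point there is a maximal endpoint t such that some single point of P sees the whole boundary piece γ '' Set.Icc s t.) -/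
/-!
The pairs `(t, g)` with `t ∈ [s, s + n]`, `g ∈ P` such that `g` sees all of `γ '' [s, t]` form a
compact set: writing `r ∈ [s, t]` as `(1 - u) s + u t` and a point of the segment from `g` to `γ r`
as `(1 - v) g + v γ r` with `u, v ∈ [0, 1]`, the visibility condition is an intersection, over
fixed parameters `u, v`, of preimages of the closed set `P` under maps continuous in `(t, g)`.
The set of endpoints is the projection of this compact set to the first coordinate, hence compact.
It contains `s`, since `γ s` sees itself, so it has a greatest element.
-/

/-- **Lemma (well-definedness of the greedy step).** Let `P` be a nonempty compact subset
of the plane, `γ` a continuous curve with range contained in `P`, `n > 0` and `s ∈ ℝ`.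
Then the set of endpoints `t ∈ [s, s + n]` such that some single point `g ∈ P` sees every
point of `γ '' [s, t]` has a greatest element. -/
theorem greedy_step_has_greatest_endpoint
    (P : Set (ℝ × ℝ)) (hne : P.Nonempty) (hcompact : IsCompact P)
    (γ : ℝ → ℝ × ℝ) (hγ : Continuous γ) (hrange : Set.range γ ⊆ P)
    (n : ℝ) (hn : 0 < n) (s : ℝ) :
    ∃ t : ℝ, IsGreatest
      {t ∈ Set.Icc s (s + n) | ∃ g ∈ P, ∀ r ∈ Set.Icc s t, segment ℝ g (γ r) ⊆ P} t := by
  have hclosed : IsClosed {p : ℝ × (ℝ × ℝ) | ∀ u ∈ Set.Icc (0 : ℝ) 1, ∀ v ∈ Set.Icc (0 : ℝ) 1,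
      (1 - v) • p.2 + v • γ ((1 - u) • s + u • p.1) ∈ P} := by
    simp only [Set.setOf_forall]
    refine isClosed_iInter fun u => isClosed_iInter fun _ => isClosed_iInter fun v =>
      isClosed_iInter fun _ => hcompact.isClosed.preimage ?_
    fun_prop
  have hK := ((isCompact_Icc (a := s) (b := s + n)).prod hcompact).inter_right hclosed
  have hT := hK.image continuous_fst
  have heq : {t ∈ Set.Icc s (s + n) | ∃ g ∈ P, ∀ r ∈ Set.Icc s t, segment ℝ g (γ r) ⊆ P} =
      Prod.fst '' ((Set.Icc s (s + n) ×ˢ P) ∩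
        {p : ℝ × (ℝ × ℝ) | ∀ u ∈ Set.Icc (0 : ℝ) 1, ∀ v ∈ Set.Icc (0 : ℝ) 1,
          (1 - v) • p.2 + v • γ ((1 - u) • s + u • p.1) ∈ P}) := by
    have key : ∀ t, s ≤ t → ∀ g : ℝ × ℝ, (∀ r ∈ Set.Icc s t, segment ℝ g (γ r) ⊆ P) ↔
        ∀ u ∈ Set.Icc (0 : ℝ) 1, ∀ v ∈ Set.Icc (0 : ℝ) 1,
          (1 - v) • g + v • γ ((1 - u) • s + u • t) ∈ P := by
      intro t ht g
      rw [← segment_eq_Icc ht]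
      simp only [segment_eq_image, Set.forall_mem_image, Set.image_subset_iff]
      rfl
    ext t
    constructor
    · rintro ⟨ht, g, hg, h⟩
      exact ⟨(t, g), ⟨⟨ht, hg⟩, (key t ht.1 g).1 h⟩, rfl⟩
    · rintro ⟨⟨t, g⟩, ⟨⟨ht, hg⟩, h⟩, rfl⟩
      exact ⟨ht, g, hg, (key t ht.1 g).2 h⟩
  rw [← heq] at hT
  refine hT.exists_isGreatest ⟨s, ⟨le_rfl, by linarith⟩, γ s, hrange ⟨s, rfl⟩, ?_⟩
  intro r hr
  obtain rfl : r = s := le_antisymm hr.2 hr.1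
  rw [segment_same]
  exact Set.singleton_subset_iff.2 (hrange ⟨r, rfl⟩)
end
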